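/- arXiv:2212.11513 — 2 statements merged into one kernel-verified Lean document; each statement's English description precedes it below -/
import Mathlib

section
/- For all nonzero complex numbers z, t, f0, f1, f2, u, the cofactor matrix of the Lax matrix satisfies (𝒜(z,t,f0,f1,f2,u))^⋄ = 𝒜(z, t⁻¹, f0⁻¹, f1⁻¹, f2⁻¹, u⁻¹). (This is the identity underlying the lift of the symmetry 𝒯₊ of q-Painlevé IV to the Lax pair.) -/
open Matrix

/-- Cofactor matrix (adjugate transpose) of a 2×2 complex matrix. -/
def cof (U : Matrix (Fin 2) (Fin 2) ℂ) : Matrix (Fin 2) (Fin 2) ℂ :=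
  !![U 1 1, -(U 1 0); -(U 0 1), U 0 0]

/-- The elementary factor M(α,t,f;z) of the Lax matrix. -/
noncomputable def Mmat (α t f z : ℂ) : Matrix (Fin 2) (Fin 2) ℂ :=
  !![-Complex.I * α * t * z / f, 1; -1, -Complex.I * α * f * z / t]

/-- The Lax matrix 𝒜(z,t,f0,f1,f2,u) of q-Painlevé IV. -/
noncomputable def laxA (q a0 a2 z t f0 f1 f2 u : ℂ) : Matrix (Fin 2) (Fin 2) ℂ :=
  !![u, 0; 0, 1] * Mmat q t f2 z * Mmat (a0 * a2) t f0 z * Mmat a0 t f1 z * !![u⁻¹, 0; 0, 1]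

/-- The identity underlying the lift of the symmetry 𝒯₊ to the Lax pair:
`(𝒜(z,t,f0,f1,f2,u))^⋄ = 𝒜(z,t⁻¹,f0⁻¹,f1⁻¹,f2⁻¹,u⁻¹)`. -/
theorem cof_laxA_eq (q a0 a2 : ℂ) (hq : q ≠ 0) (ha0 : a0 ≠ 0) (ha2 : a2 ≠ 0)
    (z t f0 f1 f2 u : ℂ) (hz : z ≠ 0) (ht : t ≠ 0) (hf0 : f0 ≠ 0) (hf1 : f1 ≠ 0)
    (hf2 : f2 ≠ 0) (hu : u ≠ 0) :
    cof (laxA q a0 a2 z t f0 f1 f2 u) = laxA q a0 a2 z t⁻¹ f0⁻¹ f1⁻¹ f2⁻¹ u⁻¹ := by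
  have hmul : ∀ A B : Matrix (Fin 2) (Fin 2) ℂ, cof (A * B) = cof A * cof B := by
    intro A B
    ext i j
    fin_cases i <;> fin_cases j <;> simp [cof, Matrix.mul_apply, Fin.sum_univ_two] <;> ring
  have hM : ∀ α f : ℂ, cof (Mmat α t f z) = Mmat α t⁻¹ f⁻¹ z := by
    intro α f
    ext i j
    fin_cases i <;> fin_cases j <;> simp [cof, Mmat, div_eq_mul_inv] <;> ring
  have h1 : cof !![u, 0; 0, 1] = u • !![u⁻¹, 0; 0, 1] := by
    ext i j
    fin_cases i <;> fin_cases j <;> simp [cof, hu]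
  have h2 : cof !![u⁻¹, 0; 0, 1] = u⁻¹ • !![u⁻¹⁻¹, 0; 0, 1] := by
    ext i j
    fin_cases i <;> fin_cases j <;> simp [cof, hu]
  unfold laxA
  rw [hmul, hmul, hmul, hmul, hM, hM, hM, h1, h2]
  simp only [Matrix.smul_mul, Matrix.mul_smul, smul_smul]
  rw [inv_mul_cancel₀ hu, one_smul]
end

section
/- For all nonzero complex numbers z, t, f0, f1, f2, u, one has -σ3 · (𝒜(z,t,f0,f1,f2,u))^⋄ · σ3 = 𝒜(z, -t⁻¹, f0⁻¹, f1⁻¹, f2⁻¹, u⁻¹). (This is the identity underlying the lift of the symmetry 𝒯₋ of q-Painlevé IV to the Lax pair.) -/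
open Matrix

/-- The Pauli matrix σ3. -/
def σ3 : Matrix (Fin 2) (Fin 2) ℂ := !![1, 0; 0, -1]

/-- The identity underlying the lift of the symmetry 𝒯₋ to the Lax pair:
`-σ3·(𝒜(z,t,f0,f1,f2,u))^⋄·σ3 = 𝒜(z,-t⁻¹,f0⁻¹,f1⁻¹,f2⁻¹,u⁻¹)`. -/
theorem neg_σ3_cof_laxA_σ3_eq (q a0 a2 : ℂ) (hq : q ≠ 0) (ha0 : a0 ≠ 0) (ha2 : a2 ≠ 0)
    (z t f0 f1 f2 u : ℂ) (hz : z ≠ 0) (ht : t ≠ 0) (hf0 : f0 ≠ 0) (hf1 : f1 ≠ 0)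
    (hf2 : f2 ≠ 0) (hu : u ≠ 0) :
    -(σ3 * cof (laxA q a0 a2 z t f0 f1 f2 u) * σ3)
      = laxA q a0 a2 z (-t⁻¹) f0⁻¹ f1⁻¹ f2⁻¹ u⁻¹ := by
  ext i j
  fin_cases i <;> fin_cases j <;>
    simp [laxA, Mmat, cof, σ3, Matrix.mul_apply, Fin.sum_univ_two] <;>
    field_simp <;> ring
end
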